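/- arXiv:1603.09266 — 4 statements merged into one kernel-verified Lean document; each statement's English description precedes it below -/
import Mathlib

section
/- Little-oh polynomials are closed under composition with smooth maps (well-valuedness of the Fermat extension •f): let U ⊆ ℝ^n be open, let f : ℝ^n → ℝ^m be C^∞ on U, and let x : ℝ → ℝ^n be a little-oh polynomial whose standard part r lies in U. Then t ↦ f(x(t)) is a little-oh polynomial, and its standard part is f(r). -/
/-!
Write `h = x - r`. Since `x` is a sum of finitely many monomials `t ^ a • α` with `a ≥ 0` and an
`o(t)` error, `h = O(t ^ a)` for some `a > 0` (`IsLittleOhPoly.exists_isBigO`). Choose `N` with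
`a * (N + 1) > 1`. In the Taylor expansion of `f` at `r` to order `N`, the remainder is
`O(‖h‖ ^ (N + 1)) = o(t)` (`taylor_remainder_isBigO`), and each Taylor term is a continuous
multilinear map evaluated at `(h, …, h)`. Little-oh polynomials are stable under addition and under
continuous bilinear maps (`IsLittleOhPoly.bilin`), because `t ^ a * t ^ b = t ^ (a + b)` for `t > 0`
and because an `o(t)` function times a bounded one is `o(t)`. Currying extends this to multilinear
maps (`IsLittleOhPoly.multilinear`), so every Taylor term is a little-oh polynomial.
-/

open Filter Asymptotics Topology

/-- A function `x : ℝ → E` is a little-oh polynomial if there are `r`, coefficients `α i`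
and positive exponents `a i` such that `x t - r - ∑ i, t ^ (a i) • α i` is `o(t)` as `t → 0⁺`. -/
def IsLittleOhPoly {E : Type*} [NormedAddCommGroup E] [NormedSpace ℝ E] (x : ℝ → E) : Prop :=
  ∃ (r : E) (k : ℕ) (α : Fin k → E) (a : Fin k → ℝ),
    (∀ i, 0 < a i) ∧
    (fun t => x t - r - ∑ i, (t ^ (a i)) • α i) =o[𝓝[>] (0 : ℝ)] fun t => t

section Closure

variable {E F G : Type*} [NormedAddCommGroup E] [NormedSpace ℝ E] [NormedAddCommGroup F]
  [NormedSpace ℝ F] [NormedAddCommGroup G] [NormedSpace ℝ G]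

lemma IsLittleOhPoly.of_isLittleO {x : ℝ → E} (h : x =o[𝓝[>] (0 : ℝ)] fun t => t) :
    IsLittleOhPoly x :=
  ⟨0, 0, Fin.elim0, Fin.elim0, fun i => i.elim0, by simpa using h⟩

lemma IsLittleOhPoly.monomial (α : E) {a : ℝ} (ha : 0 ≤ a) :
    IsLittleOhPoly (fun t : ℝ => t ^ a • α) := by
  rcases ha.eq_or_lt with rfl | ha
  · exact ⟨α, 0, Fin.elim0, Fin.elim0, fun i => i.elim0, by simp⟩
  · exact ⟨0, 1, fun _ => α, fun _ => a, fun _ => ha, by simp⟩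

lemma IsLittleOhPoly.const (α : E) : IsLittleOhPoly (fun _ : ℝ => α) := by
  simpa using IsLittleOhPoly.monomial α le_rfl

lemma IsLittleOhPoly.add {x y : ℝ → E} (hx : IsLittleOhPoly x) (hy : IsLittleOhPoly y) :
    IsLittleOhPoly (fun t => x t + y t) := by
  obtain ⟨r, k, α, a, ha, h⟩ := hx
  obtain ⟨s, l, β, b, hb, h'⟩ := hy
  refine ⟨r + s, k + l, Fin.append α β, Fin.append a b, ?_, ?_⟩
  · intro i
    refine Fin.addCases (fun i => ?_) (fun i => ?_) i
    · simpa using ha i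
    · simpa using hb i
  · refine (h.add h').congr_left fun t => ?_
    simp only [Fin.sum_univ_add, Fin.append_left, Fin.append_right]
    abel

/-- Little-oh polynomials are generated under addition by the monomials `t ^ a • α` with `a ≥ 0`
(constants being the case `a = 0`) and the functions that are `o(t)`. -/
lemma IsLittleOhPoly.induction {C : (ℝ → E) → Prop}
    (mono : ∀ (α : E) (a : ℝ), 0 ≤ a → C (fun t : ℝ => t ^ a • α))
    (small : ∀ x : ℝ → E, x =o[𝓝[>] (0 : ℝ)] (fun t => t) → C x)
    (hadd : ∀ x y : ℝ → E, C x → C y → C (fun t => x t + y t))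
    {x : ℝ → E} (hx : IsLittleOhPoly x) : C x := by
  obtain ⟨r, k, α, a, ha, h⟩ := hx
  have hsum : ∀ s : Finset (Fin k), C (fun t : ℝ => ∑ i ∈ s, t ^ a i • α i) := by
    intro s
    induction s using Finset.induction_on with
    | empty =>
      simp only [Finset.sum_empty]
      exact small _ (isLittleO_zero _ _)
    | insert i s hi ih =>
      simp only [Finset.sum_insert hi]
      exact hadd _ _ (mono _ _ (ha i).le) ih
  have := hadd _ _ (small _ h) (hadd _ _ (mono r 0 le_rfl) (hsum Finset.univ))
  refine (congrArg C (funext fun t => ?_)).mp this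
  simp only [Real.rpow_zero, one_smul]
  abel

lemma IsLittleOhPoly.sum {ι : Type*} (s : Finset ι) {x : ι → ℝ → E}
    (hx : ∀ i ∈ s, IsLittleOhPoly (x i)) : IsLittleOhPoly (fun t => ∑ i ∈ s, x i t) := by
  classical
  induction s using Finset.induction_on with
  | empty => simpa using IsLittleOhPoly.const (0 : E)
  | insert i s hi ih =>
    simp only [Finset.sum_insert hi]
    exact (hx i (by simp)).add (ih fun j hj => hx j (by simp [hj]))

lemma rpow_isBigO_rpow {a b : ℝ} (h : b ≤ a) :
    (fun t : ℝ => t ^ a) =O[𝓝[>] (0 : ℝ)] fun t => t ^ b := by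
  refine IsBigO.of_bound 1 ?_
  filter_upwards [Ioo_mem_nhdsGT (zero_lt_one' ℝ)] with t ht
  rw [Real.norm_of_nonneg (Real.rpow_nonneg ht.1.le _),
    Real.norm_of_nonneg (Real.rpow_nonneg ht.1.le _), one_mul]
  exact Real.rpow_le_rpow_of_exponent_ge ht.1 ht.2.le h

lemma rpow_isLittleO_id {a : ℝ} (h : 1 < a) :
    (fun t : ℝ => t ^ a) =o[𝓝[>] (0 : ℝ)] fun t => t := by
  have h0 : Tendsto (fun t : ℝ => t ^ (a - 1)) (𝓝[>] 0) (𝓝 0) := by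
    have := (Real.continuousAt_rpow_const 0 (a - 1) (Or.inr (by linarith))).tendsto
    rw [Real.zero_rpow (by linarith)] at this
    exact this.mono_left nhdsWithin_le_nhds
  have := ((isLittleO_one_iff ℝ).2 h0).mul_isBigO (isBigO_refl (fun t : ℝ => t) (𝓝[>] 0))
  refine this.congr' ?_ (by simp)
  filter_upwards [self_mem_nhdsWithin] with t ht
  rw [Real.rpow_sub_one (ne_of_gt ht), div_mul_cancel₀ _ (ne_of_gt ht)]

lemma IsLittleOhPoly.exists_isBigO {x : ℝ → E} (hx : IsLittleOhPoly x) :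
    ∃ (r : E) (a : ℝ), 0 < a ∧ (fun t => x t - r) =O[𝓝[>] (0 : ℝ)] fun t => t ^ a := by
  refine IsLittleOhPoly.induction
    (C := fun x => ∃ (r : E) (a : ℝ), 0 < a ∧
      (fun t => x t - r) =O[𝓝[>] (0 : ℝ)] fun t => t ^ a) ?_ ?_ ?_ hx
  · intro α a ha
    rcases ha.eq_or_lt with rfl | ha
    · exact ⟨α, 1, one_pos, by simpa using isBigO_zero _ _⟩
    · refine ⟨0, a, ha, ?_⟩
      simpa using (isBigO_refl (fun t : ℝ => t ^ a) (𝓝[>] 0)).smul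
        (isBigO_const_const α (one_ne_zero (α := ℝ)) (𝓝[>] (0 : ℝ)))
  · intro x h
    exact ⟨0, 1, one_pos, by simpa using h.isBigO⟩
  · rintro x y ⟨r, a, ha, h⟩ ⟨s, b, hb, h'⟩
    refine ⟨r + s, min a b, lt_min ha hb, ?_⟩
    refine ((h.trans (rpow_isBigO_rpow (min_le_left a b))).add
      (h'.trans (rpow_isBigO_rpow (min_le_right a b)))).congr_left fun t => ?_
    exact (add_sub_add_comm _ _ _ _).symm

lemma tendsto_of_sub_isBigO_rpow {E : Type*} [NormedAddCommGroup E] {x : ℝ → E} {r : E} {a : ℝ} (ha : 0 < a)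
    (h : (fun t => x t - r) =O[𝓝[>] (0 : ℝ)] fun t => t ^ a) :
    Tendsto x (𝓝[>] 0) (𝓝 r) := by
  refine tendsto_sub_nhds_zero_iff.1 (h.trans_tendsto ?_)
  have := (Real.continuousAt_rpow_const 0 a (Or.inr ha.le)).tendsto
  rw [Real.zero_rpow ha.ne'] at this
  exact this.mono_left nhdsWithin_le_nhds

lemma IsLittleOhPoly.isBigO_one {x : ℝ → E} (hx : IsLittleOhPoly x) :
    x =O[𝓝[>] (0 : ℝ)] fun _ => (1 : ℝ) := by
  obtain ⟨r, a, ha, h⟩ := hx.exists_isBigO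
  exact (tendsto_of_sub_isBigO_rpow ha h).isBigO_one ℝ

lemma IsLittleOhPoly.congr' {x y : ℝ → E} (hx : IsLittleOhPoly x) (h : x =ᶠ[𝓝[>] (0 : ℝ)] y) :
    IsLittleOhPoly y := by
  obtain ⟨r, k, α, a, ha, h'⟩ := hx
  refine ⟨r, k, α, a, ha, h'.congr' ?_ EventuallyEq.rfl⟩
  filter_upwards [h] with t ht
  rw [ht]

lemma bilin_isBigO (B : E →L[ℝ] F →L[ℝ] G) (x : ℝ → E) (y : ℝ → F) (l : Filter ℝ) :
    (fun t => B (x t) (y t)) =O[l] fun t => ‖x t‖ * ‖y t‖ := by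
  refine IsBigO.of_bound ‖B‖ (Eventually.of_forall fun t => ?_)
  rw [norm_mul, norm_norm, norm_norm, ← mul_assoc]
  exact B.le_opNorm₂ _ _

lemma IsLittleOhPoly.bilin (B : E →L[ℝ] F →L[ℝ] G) {x : ℝ → E} {y : ℝ → F}
    (hx : IsLittleOhPoly x) (hy : IsLittleOhPoly y) :
    IsLittleOhPoly (fun t => B (x t) (y t)) := by
  refine IsLittleOhPoly.induction (C := fun x => IsLittleOhPoly (fun t => B (x t) (y t)))
    ?_ ?_ ?_ hx
  · intro α a ha
    refine IsLittleOhPoly.induction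
      (C := fun y => IsLittleOhPoly (fun t : ℝ => B (t ^ a • α) (y t))) ?_ ?_ ?_ hy
    · intro β b hb
      refine (IsLittleOhPoly.monomial (B α β) (add_nonneg ha hb)).congr' ?_
      -- the exponent law `t ^ (a + b) = t ^ a * t ^ b` needs `t > 0`
      filter_upwards [self_mem_nhdsWithin] with t ht
      rw [Real.rpow_add ht]
      simp [smul_smul, mul_comm]
    · intro y hy
      refine .of_isLittleO ((bilin_isBigO B _ y _).trans_isLittleO ?_)
      simpa using (IsLittleOhPoly.monomial α ha).isBigO_one.norm_left.mul_isLittleO hy.norm_left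
    · intro y z hy hz
      simpa using hy.add hz
  · intro x hx
    refine .of_isLittleO ((bilin_isBigO B x y _).trans_isLittleO ?_)
    simpa using hx.norm_left.mul_isBigO hy.isBigO_one.norm_left
  · intro x z hx hz
    simpa using hx.add hz

lemma IsLittleOhPoly.clm (L : E →L[ℝ] F) {x : ℝ → E} (hx : IsLittleOhPoly x) :
    IsLittleOhPoly (fun t => L (x t)) := by
  simpa using IsLittleOhPoly.bilin (ContinuousLinearMap.id ℝ (E →L[ℝ] F)) (.const L) hx

/-- The multilinear map is itself allowed to vary with `t`: currying one variable of a fixed map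
at `h t` leaves a `t`-dependent map in one variable fewer, which is what the induction needs. -/
lemma IsLittleOhPoly.multilinear {h : ℝ → E} (hh : IsLittleOhPoly h) (j : ℕ) :
    ∀ {M : ℝ → E [×j]→L[ℝ] F}, IsLittleOhPoly M →
      IsLittleOhPoly (fun t => M t (fun _ => h t)) := by
  induction j with
  | zero =>
    intro M hM
    refine (hM.clm
      (continuousMultilinearCurryFin0 ℝ E F).toContinuousLinearEquiv.toContinuousLinearMap).congr'
      (Eventually.of_forall fun t => ?_)
    simp only [ContinuousLinearEquiv.coe_coe, LinearIsometryEquiv.coe_toContinuousLinearEquiv,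
      continuousMultilinearCurryFin0_apply]
    congr 1
    exact Subsingleton.elim _ _
  | succ j ih =>
    intro M hM
    have key := ih (hM.bilin (continuousMultilinearCurryLeftEquiv ℝ
      (fun _ : Fin (j + 1) => E) F).toContinuousLinearEquiv.toContinuousLinearMap hh)
    refine key.congr' (Eventually.of_forall fun t => ?_)
    change M t (Fin.cons (h t) fun _ => h t) = _
    congr 1
    funext i
    refine Fin.cases ?_ (fun i => ?_) i <;> simp

end Closure

lemma taylor_remainder_isBigO {E F : Type*} [NormedAddCommGroup E] [NormedSpace ℝ E]
    [NormedAddCommGroup F] [NormedSpace ℝ F] [CompleteSpace F] {f : E → F} {r : E} (N : ℕ)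
    (hf : ContDiffAt ℝ (N + 1 : ℕ) f r) :
    (fun y => f (r + y) - ∑ k ∈ Finset.range (N + 1),
      (k.factorial : ℝ)⁻¹ • iteratedFDeriv ℝ k f r (fun _ => y)) =O[𝓝 0]
      fun y => ‖y‖ ^ (N + 1) := by
  have hcd : ∀ᶠ z in 𝓝 r, ContDiffAt ℝ (N + 1 : ℕ) f z := hf.eventually (by simp)
  have hcont : ContinuousAt (iteratedFDeriv ℝ (N + 1) f) r :=
    (hf.iteratedFDeriv_right (i := N + 1) (m := 0) (by simp)).continuousAt
  have hbd : ∀ᶠ z in 𝓝 r, ‖iteratedFDeriv ℝ (N + 1) f z‖ < ‖iteratedFDeriv ℝ (N + 1) f r‖ + 1 :=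
    hcont.norm.eventually_lt_const (by linarith)
  obtain ⟨ε, hε, hball⟩ := Metric.eventually_nhds_iff_ball.1 (hcd.and hbd)
  set C := ‖iteratedFDeriv ℝ (N + 1) f r‖ + 1
  refine IsBigO.of_bound (|((N.factorial : ℝ)⁻¹)| * C) ?_
  filter_upwards [Metric.ball_mem_nhds (0 : E) hε] with y hy
  have hmem : ∀ t ∈ Set.Icc (0 : ℝ) 1, r + t • y ∈ Metric.ball r ε := by
    intro t ht
    rw [mem_ball_zero_iff] at hy
    rw [mem_ball_iff_norm, add_sub_cancel_left, norm_smul, Real.norm_of_nonneg ht.1]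
    exact (mul_le_of_le_one_left (norm_nonneg _) ht.2).trans_lt hy
  rw [map_add_eq_sum_add_integral_iteratedFDeriv (f := f) (x := r) (y := y) (n := N)
    (fun t ht => by exact_mod_cast (hball _ (hmem t ht)).1), add_sub_cancel_left, norm_smul,
    mul_assoc, Real.norm_eq_abs, norm_pow, norm_norm]
  refine mul_le_mul_of_nonneg_left ?_ (abs_nonneg _)
  have := intervalIntegral.norm_integral_le_of_norm_le_const (a := (0 : ℝ)) (b := 1)
    (C := C * ‖y‖ ^ (N + 1))
    (f := fun t : ℝ => (1 - t) ^ N • iteratedFDeriv ℝ (N + 1) f (r + t • y) (fun _ => y)) ?_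
  · simpa using this
  · intro t ht
    rw [Set.uIoc_of_le zero_le_one] at ht
    have h1 : ‖(1 - t) ^ N‖ ≤ 1 := by
      rw [norm_pow, Real.norm_of_nonneg (by linarith [ht.2])]
      exact pow_le_one₀ (by linarith [ht.2]) (by linarith [ht.1])
    have h2 := (iteratedFDeriv ℝ (N + 1) f (r + t • y)).le_opNorm (fun _ => y)
    rw [Finset.prod_const, Finset.card_univ, Fintype.card_fin] at h2
    rw [norm_smul]
    refine (mul_le_of_le_one_left (norm_nonneg _) h1).trans (h2.trans ?_)
    gcongr
    exact (hball _ (hmem t ⟨ht.1.le, ht.2⟩)).2.le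

/-- Little-oh polynomials are closed under composition with smooth maps:
if `f` is `C^∞` on an open set `U` and `x` is a little-oh polynomial whose standard
part `r` lies in `U`, then `f ∘ x` is a little-oh polynomial with standard part `f r`. -/
theorem littleOhPoly_comp_smooth {n m : ℕ}
    (U : Set (EuclideanSpace ℝ (Fin n))) (hU : IsOpen U)
    (f : EuclideanSpace ℝ (Fin n) → EuclideanSpace ℝ (Fin m))
    (hf : ContDiffOn ℝ (⊤ : ℕ∞) f U)
    (x : ℝ → EuclideanSpace ℝ (Fin n)) (r : EuclideanSpace ℝ (Fin n))
    (hx : IsLittleOhPoly x)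
    (hr : Filter.Tendsto x (𝓝[>] (0 : ℝ)) (𝓝 r))
    (hrU : r ∈ U) :
    IsLittleOhPoly (fun t => f (x t)) ∧
      Filter.Tendsto (fun t => f (x t)) (𝓝[>] (0 : ℝ)) (𝓝 (f r)) := by
  have hfr : ContDiffAt ℝ (⊤ : ℕ∞) f r := hf.contDiffAt (hU.mem_nhds hrU)
  refine ⟨?_, hfr.continuousAt.tendsto.comp hr⟩
  obtain ⟨r', a, ha, hO⟩ := hx.exists_isBigO
  obtain rfl : r' = r := tendsto_nhds_unique (tendsto_of_sub_isBigO_rpow ha hO) hr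
  obtain ⟨N, hN⟩ := exists_nat_gt (1 / a)
  have hN1 : 1 < a * (N + 1 : ℕ) := by
    rw [div_lt_iff₀ ha] at hN
    push_cast
    nlinarith
  have hh : IsLittleOhPoly (fun t => x t - r') := by
    simpa [sub_eq_add_neg] using hx.add (.const (-r'))
  have hrem := (taylor_remainder_isBigO N
    (hfr.of_le (by exact_mod_cast le_top))).comp_tendsto (tendsto_sub_nhds_zero_iff.2 hr)
  have hpow : (fun t => ‖x t - r'‖ ^ (N + 1)) =o[𝓝[>] (0 : ℝ)] fun t => t := by
    refine ((hO.norm_left.pow (N + 1)).congr' EventuallyEq.rfl ?_).trans_isLittleO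
      (rpow_isLittleO_id hN1)
    filter_upwards [self_mem_nhdsWithin] with t ht
    rw [Real.rpow_mul (le_of_lt ht), Real.rpow_natCast]
  have hsmall := IsLittleOhPoly.of_isLittleO (hrem.trans_isLittleO hpow)
  have hmain : IsLittleOhPoly (fun t => ∑ k ∈ Finset.range (N + 1),
      (k.factorial : ℝ)⁻¹ • iteratedFDeriv ℝ k f r' (fun _ => x t - r')) :=
    IsLittleOhPoly.sum _ fun k _ => by
      simpa using hh.multilinear k
        (.const ((k.factorial : ℝ)⁻¹ • iteratedFDeriv ℝ k f r'))
  refine (hsmall.add hmain).congr' (Eventually.of_forall fun t => ?_)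
  simp
end

section
/- The Fermat extension of a smooth map is well defined on equivalence classes: let U ⊆ ℝ^n be open, let f : ℝ^n → ℝ^m be C^∞ on U, and let x, y : ℝ → ℝ^n be little-oh polynomials with the same standard part r ∈ U and with x(t) − y(t) = o(t) as t → 0⁺. Then f(x(t)) − f(y(t)) = o(t) as t → 0⁺. -/
open Filter Asymptotics Topology

/-- The Fermat extension of a smooth map is well defined on equivalence classes:
if `x, y` are little-oh polynomials with the same standard part `r ∈ U` and
`x − y = o(t)`, then `f ∘ x − f ∘ y = o(t)` for any `f` which is `C^∞` on the open set `U`. -/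
theorem fermatExtension_well_defined {n m : ℕ}
    (U : Set (EuclideanSpace ℝ (Fin n))) (hU : IsOpen U)
    (f : EuclideanSpace ℝ (Fin n) → EuclideanSpace ℝ (Fin m))
    (hf : ContDiffOn ℝ (⊤ : ℕ∞) f U)
    (x y : ℝ → EuclideanSpace ℝ (Fin n)) (r : EuclideanSpace ℝ (Fin n))
    (hx : IsLittleOhPoly x) (hy : IsLittleOhPoly y)
    (hxr : Filter.Tendsto x (𝓝[>] (0 : ℝ)) (𝓝 r))
    (hyr : Filter.Tendsto y (𝓝[>] (0 : ℝ)) (𝓝 r))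
    (hrU : r ∈ U)
    (hxy : (fun t => x t - y t) =o[𝓝[>] (0 : ℝ)] fun t => t) :
    (fun t => f (x t) - f (y t)) =o[𝓝[>] (0 : ℝ)] fun t => t := by
  -- A `C^1` map is strictly differentiable, hence Lipschitz near `r`, and `x t`, `y t` both tend to `r`.
  have hstrict : HasStrictFDerivAt f (fderiv ℝ f r) r :=
    (hf.contDiffAt (hU.mem_nhds hrU)).hasStrictFDerivAt (by simp)
  exact (hstrict.isBigO_sub.comp_tendsto (hxr.prodMk_nhds hyr)).trans_isLittleO hxy
end

section
/- A map between open subsets of Euclidean spaces that is quasi-standard smooth on real points is smooth: let U ⊆ ℝ^n be open and let g : ℝ^n → ℝ^m. Suppose that for every a ∈ U there exist an open neighborhood U' ⊆ U of a, an open set P ⊆ ℝ^k, a map α : ℝ^k × ℝ^n → ℝ^m that is C^∞ on P × U', and a little-oh polynomial p : ℝ → ℝ^k whose standard part lies in P, such that for every x ∈ U', g(x) − α(p(t), x) = o(t) as t → 0⁺. Then g is C^∞ on U. (Consequently, a map between open subsets of Euclidean spaces is quasi-standard smooth if and only if it is smooth, and the standard part of a quasi-standard smooth map is smooth.) -/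
open Filter Asymptotics Topology

/-- A map between open subsets of Euclidean spaces that is quasi-standard smooth on real
points is smooth: if around every point of the open set `U` the map `g` agrees up to `o(t)`
with `α(p(t), ·)` for some smooth family `α` and some little-oh polynomial `p` with standard
part in the parameter domain, then `g` is `C^∞` on `U`. -/
theorem quasiStandardSmooth_on_reals_is_smooth {n m : ℕ}
    (U : Set (EuclideanSpace ℝ (Fin n))) (hU : IsOpen U)
    (g : EuclideanSpace ℝ (Fin n) → EuclideanSpace ℝ (Fin m))
    (h : ∀ a ∈ U, ∃ U' : Set (EuclideanSpace ℝ (Fin n)), IsOpen U' ∧ a ∈ U' ∧ U' ⊆ U ∧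
      ∃ (k : ℕ) (P : Set (EuclideanSpace ℝ (Fin k)))
        (α : EuclideanSpace ℝ (Fin k) × EuclideanSpace ℝ (Fin n) → EuclideanSpace ℝ (Fin m))
        (p : ℝ → EuclideanSpace ℝ (Fin k)) (p₀ : EuclideanSpace ℝ (Fin k)),
        IsOpen P ∧ ContDiffOn ℝ (⊤ : ℕ∞) α (P ×ˢ U') ∧
        IsLittleOhPoly p ∧ Filter.Tendsto p (𝓝[>] (0 : ℝ)) (𝓝 p₀) ∧ p₀ ∈ P ∧
        ∀ x ∈ U', (fun t => g x - α (p t, x)) =o[𝓝[>] (0 : ℝ)] fun t => t) :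
    ContDiffOn ℝ (⊤ : ℕ∞) g U := by
  intro a ha
  obtain ⟨U', hU', haU', -, k, P, α, p, p₀, hP, hα, -, hp, hp₀, hg⟩ := h a ha
  -- Near `a`, `g` is the slice `α (p₀, ·)`: both are limits of `α (p t, x)` as `t → 0⁺`.
  have hEq : ∀ x ∈ U', g x = α (p₀, x) := by
    intro x hx
    have ht : Tendsto (fun t : ℝ => t) (𝓝[>] (0 : ℝ)) (𝓝 0) :=
      tendsto_id.mono_left nhdsWithin_le_nhds
    have h1 : Tendsto (fun t => g x - α (p t, x)) (𝓝[>] (0 : ℝ)) (𝓝 0) :=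
      (hg x hx).trans_tendsto ht
    have hc : ContinuousAt α (p₀, x) :=
      hα.continuousOn.continuousAt ((hP.prod hU').mem_nhds ⟨hp₀, hx⟩)
    have h2 : Tendsto (fun t => g x - α (p t, x)) (𝓝[>] (0 : ℝ)) (𝓝 (g x - α (p₀, x))) :=
      tendsto_const_nhds.sub (hc.tendsto.comp (hp.prodMk_nhds tendsto_const_nhds))
    exact sub_eq_zero.mp (tendsto_nhds_unique h2 h1)
  have hs : ContDiffOn ℝ (⊤ : ℕ∞) (fun x => α (p₀, x)) U' :=
    hα.comp (contDiff_prodMk_right p₀).contDiffOn fun x hx => ⟨hp₀, hx⟩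
  exact ((hs.congr hEq).contDiffAt (hU'.mem_nhds haU')).contDiffWithinAt
end

section
/- A smooth family whose Fermat values along all infinitesimally shifted linear paths are standard is locally constant (the key computation showing that every section of (U ≤ •U') in CSh(𝓕') is locally constant): let V ⊆ ℝ^n be open and connected, let W ⊆ ℝ^k be open, let f : ℝ^k × ℝ^n → ℝ^m be C^∞ on W × V, and let w : ℝ → ℝ^k be a little-oh polynomial with standard part w₀ ∈ W. Suppose that for every x₀ ∈ V and every v ∈ ℝ^n, f(w(t), x₀ + t·v) − f(w₀, x₀) = o(t) as t → 0⁺. Then the map x ↦ f(w₀, x) is constant on V. -/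
/-!
Fix `x ∈ V` and a direction `v`. Comparing the hypothesis in direction `v` with the hypothesis
in direction `0` gives `f (w t, x + t • v) - f (w t, x) = o(t)`. Since `f` is `C^∞`, it is
strictly differentiable at `(w₀, x)`, so the same difference is `t • D (0, v) + o(t)`, where `D`
is the derivative of `f` at `(w₀, x)`. Strict differentiability allows both points to move with
`w t → w₀`, and their difference is exactly `(0, t • v)`, which is `O(t)`.
Hence `D (0, v) = 0`: the map `y ↦ f (w₀, y)` has zero derivative on the connected open set `V`
and is therefore constant there.
-/

open Filter Asymptotics Topology

/-- A smooth family whose Fermat values along all infinitesimally shifted linear paths are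
standard is locally constant: if `V` is open and connected, `f` is `C^∞` on `W ×ˢ V`, `w` is
a little-oh polynomial with standard part `w₀ ∈ W`, and for every `x₀ ∈ V` and direction `v`
we have `f(w(t), x₀ + t·v) − f(w₀, x₀) = o(t)` as `t → 0⁺`, then `x ↦ f(w₀, x)` is constant
on `V`. -/
theorem smooth_family_standard_values_locally_constant {n k m : ℕ}
    (V : Set (EuclideanSpace ℝ (Fin n))) (hVopen : IsOpen V) (hVconn : IsConnected V)
    (W : Set (EuclideanSpace ℝ (Fin k))) (hW : IsOpen W)
    (f : EuclideanSpace ℝ (Fin k) × EuclideanSpace ℝ (Fin n) → EuclideanSpace ℝ (Fin m))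
    (hf : ContDiffOn ℝ (⊤ : ℕ∞) f (W ×ˢ V))
    (w : ℝ → EuclideanSpace ℝ (Fin k)) (w₀ : EuclideanSpace ℝ (Fin k))
    (hw : IsLittleOhPoly w)
    (hw0 : Filter.Tendsto w (𝓝[>] (0 : ℝ)) (𝓝 w₀)) (hw0W : w₀ ∈ W)
    (h : ∀ x₀ ∈ V, ∀ v : EuclideanSpace ℝ (Fin n),
      (fun t => f (w t, x₀ + t • v) - f (w₀, x₀)) =o[𝓝[>] (0 : ℝ)] fun t => t) :
    ∀ x ∈ V, ∀ y ∈ V, f (w₀, x) = f (w₀, y) := by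
  -- The partial derivative in the second variable vanishes at every point `(w₀, x)`.
  have key : ∀ x ∈ V, HasFDerivAt (fun y => f (w₀, y))
      (0 : EuclideanSpace ℝ (Fin n) →L[ℝ] EuclideanSpace ℝ (Fin m)) x := by
    intro x hx
    have hcd : ContDiffAt ℝ (⊤ : ℕ∞) f (w₀, x) :=
      hf.contDiffAt ((hW.prod hVopen).mem_nhds ⟨hw0W, hx⟩)
    have hstrict := hcd.hasStrictFDerivAt (by simp)
    set D := fderiv ℝ f (w₀, x) with hD
    have hzero : D.comp (ContinuousLinearMap.inr ℝ (EuclideanSpace ℝ (Fin k))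
        (EuclideanSpace ℝ (Fin n))) = 0 := by
      ext1 v
      have hid : Tendsto (fun t : ℝ => x + t • v) (𝓝[>] (0 : ℝ)) (𝓝 x) := by
        have hc : Continuous (fun t : ℝ => x + t • v) := by fun_prop
        have h0 := hc.tendsto 0
        simp only [zero_smul, add_zero] at h0
        exact h0.mono_left nhdsWithin_le_nhds
      have hpair : Tendsto (fun t : ℝ => ((w t, x + t • v), (w t, x)))
          (𝓝[>] (0 : ℝ)) (𝓝 ((w₀, x), (w₀, x))) :=
        (hw0.prodMk_nhds hid).prodMk_nhds (hw0.prodMk_nhds tendsto_const_nhds)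
      -- The two points differ by `(0, t • v)`, so the error is `o(t)` at whatever rate
      -- `w t` approaches `w₀`.
      have h1 : (fun t : ℝ => f (w t, x + t • v) - f (w t, x) - t • D (0, v))
          =o[𝓝[>] (0 : ℝ)] fun t => t := by
        have hs := hstrict.isLittleO.comp_tendsto hpair
        have hdiff : ∀ t : ℝ, ((w t, x + t • v) - (w t, x) :
            EuclideanSpace ℝ (Fin k) × EuclideanSpace ℝ (Fin n)) = t • (0, v) := by
          intro t
          ext1 <;> simp
        simp only [Function.comp_def, hdiff, map_smul] at hs
        refine hs.trans_isBigO (IsBigO.of_bound ‖((0, v) :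
          EuclideanSpace ℝ (Fin k) × EuclideanSpace ℝ (Fin n))‖ (Eventually.of_forall ?_))
        intro t
        rw [norm_smul, mul_comm]
      have h2 := h x hx v
      have h3 := h x hx 0
      simp only [smul_zero, add_zero] at h3
      have h4 : (fun t : ℝ => t • D (0, v)) =o[𝓝[>] (0 : ℝ)] fun t => t := by
        refine ((h2.sub h3).sub h1).congr_left fun t => ?_
        abel
      have h5 : Tendsto (fun _ : ℝ => D (0, v)) (𝓝[>] (0 : ℝ)) (𝓝 0) := by
        refine h4.tendsto_inv_smul_nhds_zero.congr' ?_
        filter_upwards [self_mem_nhdsWithin] with t ht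
        exact inv_smul_smul₀ (ne_of_gt ht) _
      simpa using tendsto_nhds_unique tendsto_const_nhds h5
    have hcomp := hstrict.hasFDerivAt.comp x (hasFDerivAt_prodMk_right w₀ x)
    rw [hzero] at hcomp
    exact hcomp
  intro x hx y hy
  exact hVopen.is_const_of_fderiv_eq_zero hVconn.isPreconnected
    (fun z hz => (key z hz).differentiableAt.differentiableWithinAt)
    (fun z hz => (key z hz).fderiv) hx hy
end
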